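/- Let n ≥ 1, R > 0, and let f ∈ C¹(ℝ^{n+1}) have compact support contained in Q_R ∪ ∂'Q_R (in particular f vanishes outside Q_R ∪ ∂'Q_R). Then for every X ∈ Q_R one has |f(X)| ≤ (2/ω_n) ∫_{Q_R} |∇f(Y)| / |X − Y|^n dY, where ω_n is the surface area of the unit sphere 𝕊ⁿ ⊂ ℝ^{n+1}. -/

import Mathlib

open MeasureTheory Metric Set Real

noncomputable section

/-- Points of `ℝ^{n+1}` written as `X = (x, t)` with `x ∈ ℝⁿ`, `t ∈ ℝ`. -/
abbrev Pt (n : ℕ) := EuclideanSpace ℝ (Fin n) × ℝ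

/-- The box `Q_R = B_R × (0, R) ⊂ ℝ^{n+1}`. -/
def Q (n : ℕ) (R : ℝ) : Set (Pt n) :=
  (ball (0 : EuclideanSpace ℝ (Fin n)) R) ×ˢ (Ioo (0 : ℝ) R)

/-- The bottom boundary `∂'Q_R = B_R × {0}`. -/
def Q' (n : ℕ) (R : ℝ) : Set (Pt n) :=
  (ball (0 : EuclideanSpace ℝ (Fin n)) R) ×ˢ ({(0 : ℝ)} : Set ℝ)

/-- The Euclidean distance on `ℝ^{n+1} = ℝⁿ × ℝ`. -/
def edist' (n : ℕ) (X Y : Pt n) : ℝ :=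
  Real.sqrt (‖X.1 - Y.1‖ ^ 2 + (X.2 - Y.2) ^ 2)

/-- `ω_n`, the surface area of the unit sphere `𝕊ⁿ ⊂ ℝ^{n+1}`,
which equals `(n+1)` times the volume of the unit ball of `ℝ^{n+1}`. -/
def sphereArea (n : ℕ) : ℝ :=
  (n + 1) * (volume (ball (0 : EuclideanSpace ℝ (Fin (n + 1))) 1)).toReal

section RieszPotential

variable {E : Type*} [NormedAddCommGroup E] [NormedSpace ℝ E] [FiniteDimensional ℝ E]
  [MeasurableSpace E] [BorelSpace E] [Nontrivial E] (μ : Measure E) [μ.IsAddHaarMeasure]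

/-- Integration in polar coordinates for the lower Lebesgue integral. -/
lemma lintegral_eq_lintegral_toSphere {F : E → ENNReal} (hF : Measurable F) :
    ∫⁻ y, F y ∂μ = ∫⁻ θ : sphere (0 : E) 1, (∫⁻ r in Ioi (0 : ℝ),
      ENNReal.ofReal (r ^ (Module.finrank ℝ E - 1)) * F (r • (θ : E))) ∂μ.toSphere := by
  have hm : Measurable fun p : sphere (0 : E) 1 × Ioi (0 : ℝ) ↦ F (p.2.1 • p.1.1) := by
    fun_prop
  calc ∫⁻ y, F y ∂μ
      = ∫⁻ y : ({0}ᶜ : Set E), F y ∂(μ.comap (↑)) := by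
        rw [lintegral_subtype_comap (measurableSet_singleton _).compl, restrict_compl_singleton]
    _ = ∫⁻ p : sphere (0 : E) 1 × Ioi (0 : ℝ), F (p.2.1 • p.1.1)
          ∂(μ.toSphere.prod (.volumeIoiPow (Module.finrank ℝ E - 1))) := by
        rw [← μ.measurePreserving_homeomorphUnitSphereProd.lintegral_comp hm]
        refine lintegral_congr fun y ↦ ?_
        have hy : ‖(y : E)‖ ≠ 0 := norm_ne_zero_iff.2 y.2
        simp [smul_smul, hy]
    _ = _ := by
        rw [lintegral_prod _ hm.aemeasurable]
        refine lintegral_congr fun θ ↦ ?_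
        rw [Measure.volumeIoiPow, lintegral_withDensity_eq_lintegral_mul _ (by fun_prop)
          (by fun_prop)]
        exact lintegral_subtype_comap measurableSet_Ioi
          fun r : ℝ ↦ ENNReal.ofReal (r ^ (Module.finrank ℝ E - 1)) * F (r • (θ : E))

lemma lintegral_div_norm_pow {h : E → ℝ} (hc : Continuous h) :
    ∫⁻ y, ENNReal.ofReal (h y / ‖y‖ ^ (Module.finrank ℝ E - 1)) ∂μ =
      ∫⁻ θ : sphere (0 : E) 1, (∫⁻ r in Ioi (0 : ℝ), ENNReal.ofReal (h (r • (θ : E))))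
        ∂μ.toSphere := by
  have hm : Measurable h := hc.measurable
  rw [lintegral_eq_lintegral_toSphere μ (by fun_prop)]
  refine lintegral_congr fun θ ↦ setLIntegral_congr_fun measurableSet_Ioi fun r hr ↦ ?_
  have hr : 0 < r := hr
  rw [← ENNReal.ofReal_mul (by positivity)]
  congr 1
  rw [norm_smul, norm_eq_of_mem_sphere, mul_one, Real.norm_of_nonneg hr.le]
  field_simp

/-- The Riesz kernel of order one is locally integrable. -/
lemma integrable_div_norm_pow {h : E → ℝ} (hc : Continuous h) (hs : HasCompactSupport h)
    (h0 : 0 ≤ h) : Integrable (fun y ↦ h y / ‖y‖ ^ (Module.finrank ℝ E - 1)) μ := by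
  have hm : Measurable h := hc.measurable
  refine ⟨Measurable.aestronglyMeasurable (by fun_prop), ?_⟩
  rw [hasFiniteIntegral_iff_ofReal (.of_forall fun y ↦ div_nonneg (h0 y) (by positivity)),
    lintegral_div_norm_pow μ hc]
  obtain ⟨C, hC⟩ := hc.bounded_above_of_compact_support hs
  obtain ⟨ρ, hρ⟩ := hs.isBounded.subset_closedBall 0
  have key (θ : sphere (0 : E) 1) : ∫⁻ r in Ioi (0 : ℝ), ENNReal.ofReal (h (r • (θ : E))) ≤
      ENNReal.ofReal C * volume (Ioc 0 ρ) := by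
    rw [← setLIntegral_const, ← lintegral_indicator measurableSet_Ioi,
      ← lintegral_indicator measurableSet_Ioc]
    refine lintegral_mono fun r ↦ ?_
    by_cases hr : r ∈ Ioi (0 : ℝ)
    · rw [indicator_of_mem hr]
      by_cases hrρ : r ≤ ρ
      · rw [indicator_of_mem (show r ∈ Ioc 0 ρ from ⟨hr, hrρ⟩)]
        exact ENNReal.ofReal_le_ofReal ((le_abs_self _).trans (hC _))
      · have : h (r • (θ : E)) = 0 := by
          by_contra hne
          have := hρ (subset_tsupport _ hne)
          rw [mem_closedBall_zero_iff, norm_smul, norm_eq_of_mem_sphere, mul_one] at this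
          exact hrρ ((le_abs_self r).trans this)
        simp [this]
    · simp [indicator_of_notMem hr]
  refine (lintegral_mono key).trans_lt ?_
  rw [lintegral_const]
  exact ENNReal.mul_lt_top (by simp [ENNReal.mul_lt_top]) (measure_lt_top _ _)

lemma abs_apply_zero_mul_le_integral_div_norm_pow {g h : E → ℝ} (hg : ContDiff ℝ 1 g)
    (hgs : HasCompactSupport g) (hc : Continuous h) (hs : HasCompactSupport h)
    (hle : ∀ y, ‖fderiv ℝ g y‖ ≤ h y) :
    |g 0| * (Module.finrank ℝ E * μ.real (ball 0 1)) ≤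
      ∫ y, h y / ‖y‖ ^ (Module.finrank ℝ E - 1) ∂μ := by
  have h0 : 0 ≤ h := fun y ↦ (norm_nonneg _).trans (hle y)
  have hq : ∀ y, 0 ≤ h y / ‖y‖ ^ (Module.finrank ℝ E - 1) :=
    fun y ↦ div_nonneg (h0 y) (by positivity)
  have key (θ : sphere (0 : E) 1) :
      ENNReal.ofReal |g 0| ≤ ∫⁻ r in Ioi (0 : ℝ), ENNReal.ofReal (h (r • (θ : E))) := by
    have hemb : Topology.IsClosedEmbedding fun r : ℝ ↦ r • (θ : E) :=
      isClosedEmbedding_smul_left (ne_zero_of_mem_unit_sphere θ)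
    have hline : ContDiff ℝ 1 fun r : ℝ ↦ g (r • (θ : E)) := by fun_prop
    have hlines : HasCompactSupport fun r : ℝ ↦ g (r • (θ : E)) :=
      hgs.comp_isClosedEmbedding hemb
    have hint := hlines.integral_Ioi_deriv_eq hline 0
    rw [zero_smul] at hint
    rw [← abs_neg, ← hint, ← Real.norm_eq_abs, ofReal_norm]
    refine (enorm_integral_le_lintegral_enorm _).trans (lintegral_mono fun r ↦ ?_)
    rw [← ofReal_norm]
    refine ENNReal.ofReal_le_ofReal (le_trans ?_ (hle _))
    have hd : HasDerivAt (fun r : ℝ ↦ g (r • (θ : E))) (fderiv ℝ g (r • (θ : E)) θ) r := by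
      have h1 : HasDerivAt (fun r : ℝ ↦ r • (θ : E)) (θ : E) r := by
        simpa using (hasDerivAt_id r).smul_const (θ : E)
      exact ((hg.differentiable one_ne_zero _).hasFDerivAt).comp_hasDerivAt r h1
    rw [hd.deriv]
    simpa using (fderiv ℝ g (r • (θ : E))).le_opNorm θ
  rw [← μ.toSphere_real_apply_univ, integral_eq_lintegral_of_nonneg_ae (.of_forall hq)
    (integrable_div_norm_pow μ hc hs h0).aestronglyMeasurable,
    ← ENNReal.ofReal_le_iff_le_toReal (integrable_div_norm_pow μ hc hs h0).lintegral_lt_top.ne,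
    lintegral_div_norm_pow μ hc, ENNReal.ofReal_mul (abs_nonneg _), ofReal_measureReal,
    ← lintegral_const]
  exact lintegral_mono key

/-- A compactly supported `C¹` function is bounded by the Riesz potential of any compactly
supported continuous majorant of the norm of its derivative. -/
lemma abs_mul_le_integral_div_norm_sub_pow {g h : E → ℝ} (hg : ContDiff ℝ 1 g)
    (hgs : HasCompactSupport g) (hc : Continuous h) (hs : HasCompactSupport h)
    (hle : ∀ y, ‖fderiv ℝ g y‖ ≤ h y) (x : E) :
    |g x| * (Module.finrank ℝ E * μ.real (ball 0 1)) ≤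
      ∫ y, h y / ‖x - y‖ ^ (Module.finrank ℝ E - 1) ∂μ := by
  have hemb : Topology.IsClosedEmbedding fun y ↦ x + y := (Homeomorph.addLeft x).isClosedEmbedding
  have := abs_apply_zero_mul_le_integral_div_norm_pow μ (g := fun y ↦ g (x + y))
    (h := fun y ↦ h (x + y)) (by fun_prop) (hgs.comp_isClosedEmbedding hemb) (by fun_prop)
    (hs.comp_isClosedEmbedding hemb) (fun y ↦ by rw [fderiv_comp_add_left]; exact hle _)
  rw [← integral_add_left_eq_self _ x]
  simpa using this

end RieszPotential

lemma norm_toLp_sub (n : ℕ) (X Y : Pt n) :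
    ‖WithLp.toLp 2 X - WithLp.toLp 2 Y‖ = edist' n X Y := by
  rw [← WithLp.toLp_sub, WithLp.prod_norm_eq_of_L2]
  simp [edist']

lemma sphereArea_pos (n : ℕ) : 0 < sphereArea n :=
  mul_pos (by positivity)
    (ENNReal.toReal_pos (measure_ball_pos _ _ one_pos).ne' measure_ball_lt_top.ne)

lemma finrank_withLp_pt (n : ℕ) : Module.finrank ℝ (WithLp 2 (Pt n)) = n + 1 := by
  simp [(WithLp.linearEquiv 2 ℝ (Pt n)).finrank_eq]

lemma sphereArea_eq (n : ℕ) :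
    sphereArea n = Module.finrank ℝ (WithLp 2 (Pt n)) *
      (volume : Measure (WithLp 2 (Pt n))).real (ball 0 1) := by
  have hd := finrank_withLp_pt n
  have : Nontrivial (WithLp 2 (Pt n)) := Module.nontrivial_of_finrank_pos (R := ℝ) (by omega)
  rw [sphereArea, measureReal_def, InnerProductSpace.volume_ball, InnerProductSpace.volume_ball, hd]
  simp

/-- The bound over the whole space, without the factor two. -/
lemma abs_mul_sphereArea_le_integral (n : ℕ) {f : Pt n → ℝ} (hf : ContDiff ℝ 1 f)
    (hsupp : HasCompactSupport f) (X : Pt n) :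
    |f X| * sphereArea n ≤ ∫ Y, ‖fderiv ℝ f Y‖ / (edist' n X Y) ^ n := by
  have hd := finrank_withLp_pt n
  have : Nontrivial (WithLp 2 (Pt n)) := Module.nontrivial_of_finrank_pos (R := ℝ) (by omega)
  let Φ : WithLp 2 (Pt n) ≃L[ℝ] Pt n := WithLp.prodContinuousLinearEquiv 2 ℝ _ _
  have hΦ : ‖(Φ : WithLp 2 (Pt n) →L[ℝ] Pt n)‖ ≤ 1 := by
    refine ContinuousLinearMap.opNorm_le_bound _ zero_le_one fun y ↦ ?_
    rw [one_mul]
    exact max_le (WithLp.norm_fst_le _ y) (WithLp.norm_snd_le _ y)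
  have hfd : Continuous (fderiv ℝ f) := hf.continuous_fderiv one_ne_zero
  have key := abs_mul_le_integral_div_norm_sub_pow (volume : Measure (WithLp 2 (Pt n)))
    (g := f ∘ Φ) (h := fun y ↦ ‖fderiv ℝ f (Φ y)‖) (hf.comp Φ.contDiff)
    (hsupp.comp_homeomorph Φ.toHomeomorph) (by fun_prop)
    ((hsupp.fderiv ℝ).norm.comp_homeomorph Φ.toHomeomorph)
    (fun y ↦ by
      rw [Φ.comp_right_fderiv]
      exact (ContinuousLinearMap.opNorm_comp_le _ _).trans
        (mul_le_of_le_one_right (norm_nonneg _) hΦ)) (WithLp.toLp 2 X)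
  rw [← sphereArea_eq, hd, Nat.add_sub_cancel] at key
  refine key.trans_eq ?_
  rw [← (WithLp.volume_preserving_ofLp (EuclideanSpace ℝ (Fin n)) ℝ).integral_comp
    (MeasurableEquiv.toLp 2 (Pt n)).symm.measurableEmbedding]
  refine integral_congr_ae (.of_forall fun y ↦ ?_)
  change _ = ‖fderiv ℝ f y.ofLp‖ / edist' n X y.ofLp ^ n
  rw [← norm_toLp_sub]
  rfl

lemma volume_Q' (n : ℕ) (R : ℝ) : volume (Q' n R) = 0 := by
  rw [Q', Measure.volume_eq_prod, Measure.prod_prod]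
  simp

/-- **Riesz-potential bound** (inequality (2.2)): if `f ∈ C¹` has compact support
contained in `Q_R ∪ ∂'Q_R`, then for every `X ∈ Q_R`,
`|f(X)| ≤ (2/ω_n) ∫_{Q_R} |∇f(Y)|/|X − Y|ⁿ dY`. -/
theorem riesz_potential_bound (n : ℕ) (hn : 1 ≤ n) (R : ℝ) (hR : 0 < R)
    (f : Pt n → ℝ) (hf : ContDiff ℝ 1 f) (hsupp : HasCompactSupport f)
    (hsub : tsupport f ⊆ Q n R ∪ Q' n R) :
    ∀ X ∈ Q n R,
      |f X| ≤ (2 / sphereArea n) *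
        ∫ Y in Q n R, ‖fderiv ℝ f Y‖ / (edist' n X Y) ^ n := by
  intro X _
  have hQ : ∫ Y, ‖fderiv ℝ f Y‖ / (edist' n X Y) ^ n =
      ∫ Y in Q n R, ‖fderiv ℝ f Y‖ / (edist' n X Y) ^ n := by
    rw [← setIntegral_congr_set (union_ae_eq_left_of_ae_eq_empty
      (ae_eq_empty.2 (volume_Q' n R))), setIntegral_eq_integral_of_forall_compl_eq_zero]
    intro Y hY
    have : fderiv ℝ f Y = 0 := by
      by_contra hne
      exact hY (hsub (support_fderiv_subset ℝ hne))
    simp [this]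
  have hω := sphereArea_pos n
  have hle := abs_mul_sphereArea_le_integral n hf hsupp X
  rw [hQ] at hle
  rw [div_mul_eq_mul_div, le_div_iff₀ hω]
  have : 0 ≤ |f X| * sphereArea n := by positivity
  linarith
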